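/- Let ℍ be the real quaternion algebra, with all tensor products taken over ℚ. The first Hochschild homology I₁(ℍ)/B₁(ℍ) is isomorphic, as an abelian group, to the module Ω¹_ℝ of Kähler differentials of ℝ over ℤ; here I₁(ℍ) = {x ∈ ℍ ⊗_ℚ ℍ : μ(x) = 0 and μ(σ(x)) = 0} and B₁(ℍ) is the image under b₂(a⊗b⊗c) = ab⊗c − a⊗bc + ca⊗b of Ω₂(ℍ) = ker(μ⊗id) ∩ ker(id⊗μ) ⊂ ℍ^{⊗3}. -/

import Mathlib

open scoped TensorProduct DirectSum

noncomputable section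

variable (A : Type) [Ring A] [Algebra ℚ A]

/-- Multiplication `A ⊗ A → A`. -/
def mu2 : (A ⊗[ℚ] A) →ₗ[ℚ] A := LinearMap.mul' ℚ A

/-- `a ⊗ b ⊗ c ↦ ab ⊗ c`. -/
def m12 : (A ⊗[ℚ] (A ⊗[ℚ] A)) →ₗ[ℚ] (A ⊗[ℚ] A) :=
  (TensorProduct.map (LinearMap.mul' ℚ A) LinearMap.id) ∘ₗ
    (TensorProduct.assoc ℚ A A A).symm.toLinearMap

/-- `a ⊗ b ⊗ c ↦ a ⊗ bc`. -/
def m23 : (A ⊗[ℚ] (A ⊗[ℚ] A)) →ₗ[ℚ] (A ⊗[ℚ] A) :=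
  TensorProduct.map LinearMap.id (LinearMap.mul' ℚ A)

/-- `a ⊗ b ⊗ c ↦ ca ⊗ b`. -/
def m31 : (A ⊗[ℚ] (A ⊗[ℚ] A)) →ₗ[ℚ] (A ⊗[ℚ] A) :=
  (TensorProduct.comm ℚ A A).toLinearMap ∘ₗ
    (TensorProduct.map LinearMap.id (LinearMap.mul' ℚ A)) ∘ₗ
    (TensorProduct.assoc ℚ A A A).toLinearMap ∘ₗ
    (TensorProduct.comm ℚ A (A ⊗[ℚ] A)).toLinearMap

/-- The Hochschild boundary `b₂(a ⊗ b ⊗ c) = ab ⊗ c − a ⊗ bc + ca ⊗ b`. -/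
def hochB2 : (A ⊗[ℚ] (A ⊗[ℚ] A)) →ₗ[ℚ] (A ⊗[ℚ] A) := m12 A - m23 A + m31 A

/-- `Ω₂(A) = ker(μ ⊗ id) ∩ ker(id ⊗ μ)`. -/
def Omega2 : Submodule ℚ (A ⊗[ℚ] (A ⊗[ℚ] A)) := LinearMap.ker (m12 A) ⊓ LinearMap.ker (m23 A)

/-- `I₁(A) = {x : μ(x) = 0, μ(σ(x)) = 0}`. -/
def I1 : Submodule ℚ (A ⊗[ℚ] A) :=
  LinearMap.ker (mu2 A) ⊓
    LinearMap.ker ((mu2 A) ∘ₗ (TensorProduct.comm ℚ A A).toLinearMap)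

/-- `B₁(A) = b₂(Ω₂(A))`. -/
def B1 : Submodule ℚ (A ⊗[ℚ] A) := (Omega2 A).map (hochB2 A)

/-!
Work with chains modulo all Hochschild boundaries. A separability idempotent `e = ∑ eᵢ ⊗ fᵢ` with
`e (1 ⊗ u) = (u ⊗ 1) e` gives, through the boundary of `∑ c eᵢ ⊗ fᵢ ⊗ u`, the relation
`[c ⊗ u] = [((c u - u c) ⊗ 1) e]`. Hence `[a ⊗ s u] = [u a ⊗ s] + [((a s u - s u a) ⊗ 1) e]` for
central `s`. For quaternions `e = ¼(1 ⊗ 1 - i ⊗ i - j ⊗ j - k ⊗ k)` works for `u = 1, i, j, k`, and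
`z ↦ [z ⊗ s]` is tracial, so `[u a ⊗ s] = re(u a) [1 ⊗ s]`, the image of `re(u a) ds`. Summing over
the coordinates, `[x]` is the image of a differential form plus a term depending only on
`μ(x) - μ(σ(x))`, which vanishes on `I₁`. So on `I₁` the form `re(a ∇b)` attached to `a ⊗ b`
determines the class.
-/

open scoped Quaternion KaehlerDifferential

section HochschildBoundary

variable {A}

@[simp]
theorem mu2_tmul (a b : A) : mu2 A (a ⊗ₜ b) = a * b :=
  LinearMap.mul'_apply

@[simp]
theorem m12_tmul (a b c : A) : m12 A (a ⊗ₜ (b ⊗ₜ c)) = (a * b) ⊗ₜ c := by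
  simp [m12]

@[simp]
theorem m23_tmul (a b c : A) : m23 A (a ⊗ₜ (b ⊗ₜ c)) = a ⊗ₜ (b * c) := by
  simp [m23]

@[simp]
theorem m31_tmul (a b c : A) : m31 A (a ⊗ₜ (b ⊗ₜ c)) = (c * a) ⊗ₜ b := by
  simp [m31]

@[simp]
theorem hochB2_tmul (a b c : A) :
    hochB2 A (a ⊗ₜ (b ⊗ₜ c)) = (a * b) ⊗ₜ c - a ⊗ₜ (b * c) + (c * a) ⊗ₜ b := by
  simp [hochB2]

theorem hochB2_sub_mu2_tmul_one_mem_B1 (y : A ⊗[ℚ] (A ⊗[ℚ] A)) :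
    hochB2 A y - mu2 A (hochB2 A y) ⊗ₜ 1 ∈ B1 A := by
  suffices h : (B1 A).mkQ ∘ₗ
      (LinearMap.id - (TensorProduct.mk ℚ A A).flip 1 ∘ₗ mu2 A) ∘ₗ hochB2 A = 0 from
    (Submodule.Quotient.mk_eq_zero _).mp (DFunLike.congr_fun h y)
  refine TensorProduct.ext_threefold' fun a b c ↦ (Submodule.Quotient.mk_eq_zero _).mpr ?_
  -- `a ⊗ b ⊗ c` corrected by degenerate chains so as to lie in `Ω₂`.
  refine ⟨a ⊗ₜ (b ⊗ₜ c) - a ⊗ₜ ((b * c) ⊗ₜ 1) - (a * b) ⊗ₜ (1 ⊗ₜ c) + (a * b) ⊗ₜ (c ⊗ₜ 1),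
    ⟨by simp [mul_assoc], by simp⟩, ?_⟩
  simp only [map_add, map_sub, hochB2_tmul, mu2_tmul, mul_assoc, mul_one, one_mul,
    LinearMap.comp_apply, LinearMap.sub_apply, LinearMap.id_apply, LinearMap.flip_apply,
    TensorProduct.mk_apply, sub_add_cancel, sub_self, zero_add]
  abel

theorem mem_B1_iff_mem_range_hochB2 {x : A ⊗[ℚ] A} (hx : x ∈ I1 A) :
    x ∈ B1 A ↔ x ∈ LinearMap.range (hochB2 A) := by
  refine ⟨fun h ↦ LinearMap.map_le_range h, ?_⟩
  rintro ⟨y, rfl⟩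
  have hmu : mu2 A (hochB2 A y) = 0 := hx.1
  simpa [hmu] using hochB2_sub_mu2_tmul_one_mem_B1 y

theorem tmul_sub_commutator_mul_mem_range_hochB2 {e : A ⊗[ℚ] A} (he : mu2 A e = 1) {u : A}
    (heu : e * (1 ⊗ₜ u) = (u ⊗ₜ 1) * e) (c : A) :
    c ⊗ₜ u - ((c * u - u * c) ⊗ₜ 1) * e ∈ LinearMap.range (hochB2 A) := by
  have insert_boundary (x : A ⊗[ℚ] A) : (c * mu2 A x) ⊗ₜ u - (c ⊗ₜ 1) * (x * (1 ⊗ₜ u)) +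
      ((u * c) ⊗ₜ 1) * x ∈ LinearMap.range (hochB2 A) := by
    induction x with
    | zero => simp
    | tmul x y => exact ⟨(c * x) ⊗ₜ (y ⊗ₜ u), by simp [mul_assoc]⟩
    | add x y hx hy =>
      convert add_mem hx hy using 1
      simp only [map_add, mul_add, add_mul, TensorProduct.add_tmul]
      abel
  have h := insert_boundary e
  rw [he, heu, ← mul_assoc, Algebra.TensorProduct.tmul_mul_tmul] at h
  simpa [TensorProduct.sub_tmul, sub_mul, sub_add] using h

end HochschildBoundary

section HochschildCokernel

variable (R : Type*) [CommRing R] [Algebra R A]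

theorem hochB2_smul (r : R) (y : A ⊗[ℚ] (A ⊗[ℚ] A)) :
    hochB2 A (r • y) = r • hochB2 A y := by
  suffices h : hochB2 A ∘ₗ DistribSMul.toLinearMap ℚ _ r =
      DistribSMul.toLinearMap ℚ _ r ∘ₗ hochB2 A from DFunLike.congr_fun h y
  refine TensorProduct.ext_threefold' fun a b c ↦ ?_
  simp [TensorProduct.smul_tmul', smul_add, smul_sub]

/-- The Hochschild `1`-boundaries `b₂(A^{⊗3})`, without the normalization by `Ω₂`, as a submodule
over a commutative ring `R` acting on the left tensor factor of `A ⊗ A`. -/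
def hochBoundaries : Submodule R (A ⊗[ℚ] A) where
  __ := (LinearMap.range (hochB2 A)).toAddSubmonoid
  smul_mem' := by
    rintro r _ ⟨y, rfl⟩
    exact ⟨r • y, hochB2_smul A R r y⟩

variable {A}

/-- The class of a Hochschild `1`-chain modulo boundaries. -/
def hochClass : A ⊗[ℚ] A →ₗ[R] (A ⊗[ℚ] A) ⧸ hochBoundaries A R :=
  (hochBoundaries A R).mkQ

theorem hochClass_eq_zero_iff {x : A ⊗[ℚ] A} :
    hochClass R x = 0 ↔ x ∈ LinearMap.range (hochB2 A) :=
  Submodule.Quotient.mk_eq_zero _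

theorem hochClass_tmul_mul (a b c : A) :
    hochClass R (a ⊗ₜ (b * c)) = hochClass R ((a * b) ⊗ₜ c) + hochClass R ((c * a) ⊗ₜ b) := by
  have h := (hochClass_eq_zero_iff R).mpr ⟨a ⊗ₜ (b ⊗ₜ c), hochB2_tmul a b c⟩
  rw [map_add, map_sub, sub_add_eq_add_sub, sub_eq_zero] at h
  exact h.symm

theorem hochClass_mul_comm_tmul_algebraMap (a b : A) (s : R) :
    hochClass R ((a * b) ⊗ₜ algebraMap R A s) = hochClass R ((b * a) ⊗ₜ algebraMap R A s) := by
  have hsa := hochClass_tmul_mul R b (algebraMap R A s) a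
  rw [Algebra.commutes s a, ← Algebra.commutes s b, hochClass_tmul_mul, add_comm] at hsa
  exact (add_left_cancel hsa).symm

theorem hochClass_tmul_smul_eq_add_commutator {e : A ⊗[ℚ] A} (he : mu2 A e = 1) {u : A}
    (heu : e * (1 ⊗ₜ u) = (u ⊗ₜ 1) * e) (a : A) (s : R) :
    hochClass R (a ⊗ₜ (s • u)) = hochClass R ((u * a) ⊗ₜ algebraMap R A s) +
      hochClass R (((a * s • u - s • u * a) ⊗ₜ 1) * e) := by
  have h := (hochClass_eq_zero_iff R).mpr
    (tmul_sub_commutator_mul_mem_range_hochB2 he heu (s • a))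
  rw [map_sub, sub_eq_zero] at h
  rw [Algebra.smul_def, hochClass_tmul_mul, ← Algebra.commutes, ← Algebra.smul_def,
    ← Algebra.smul_def, h, add_comm]
  simp only [smul_mul_assoc, mul_smul_comm]

/-- The derivation `s ↦ [1 ⊗ s]` from `R` to the Hochschild `1`-chains modulo boundaries. -/
def hochDerivation : Derivation ℤ R ((A ⊗[ℚ] A) ⧸ hochBoundaries A R) :=
  Derivation.mk'
    ((hochClass R).toAddMonoidHom.comp ((TensorProduct.mk ℚ A A 1).toAddMonoidHom.comp
      (algebraMap R A).toAddMonoidHom)).toIntLinearMap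
    fun s t ↦ by
      have h := hochClass_tmul_mul R (1 : A) (algebraMap R A s) (algebraMap R A t)
      simpa [Algebra.algebraMap_eq_smul_one s, Algebra.algebraMap_eq_smul_one t,
        ← TensorProduct.smul_tmul'] using h

variable (A) in
/-- The map `Ω¹_R → (A ⊗ A) / b₂(A^{⊗3})`, `r ds ↦ [r ⊗ s]`. -/
def kaehlerToHoch : Ω[R⁄ℤ] →ₗ[R] (A ⊗[ℚ] A) ⧸ hochBoundaries A R :=
  (hochDerivation R).liftKaehlerDifferential

theorem kaehlerToHoch_D (s : R) :
    kaehlerToHoch A R (KaehlerDifferential.D ℤ R s) = hochClass R (1 ⊗ₜ algebraMap R A s) :=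
  (hochDerivation R).liftKaehlerDifferential_comp_D s

end HochschildCokernel

section QuaternionCasimir

variable {A} {R : Type*} [CommRing R] [Algebra R A] (q : QuaternionAlgebra.Basis A (-1 : R) 0 (-1))

/-- The separability idempotent `¼(1 ⊗ 1 - i ⊗ i - j ⊗ j - k ⊗ k)` of a quaternion algebra. -/
def quaternionCasimir : A ⊗[ℚ] A :=
  (1 / 4 : ℚ) • (1 ⊗ₜ 1 - q.i ⊗ₜ q.i - q.j ⊗ₜ q.j - q.k ⊗ₜ q.k)

theorem mu2_quaternionCasimir : mu2 A (quaternionCasimir q) = 1 := by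
  simp only [quaternionCasimir, map_smul, map_sub, mu2_tmul, mul_one, q.i_mul_i, q.j_mul_j,
    q.k_mul_k, mul_neg, neg_neg, neg_smul, one_smul, zero_smul, add_zero]
  module

theorem quaternionCasimir_mul_i :
    quaternionCasimir q * (1 ⊗ₜ q.i) = (q.i ⊗ₜ 1) * quaternionCasimir q := by
  simp only [quaternionCasimir, smul_mul_assoc, mul_smul_comm, sub_mul, mul_sub,
    Algebra.TensorProduct.tmul_mul_tmul, mul_one, one_mul, q.i_mul_i, q.i_mul_j, q.j_mul_i,
    q.i_mul_k, q.k_mul_i, neg_smul, one_smul, zero_smul, add_zero, zero_sub, neg_neg,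
    TensorProduct.tmul_neg, TensorProduct.neg_tmul]
  module

theorem quaternionCasimir_mul_j :
    quaternionCasimir q * (1 ⊗ₜ q.j) = (q.j ⊗ₜ 1) * quaternionCasimir q := by
  simp only [quaternionCasimir, smul_mul_assoc, mul_smul_comm, sub_mul, mul_sub,
    Algebra.TensorProduct.tmul_mul_tmul, mul_one, one_mul, q.j_mul_j, q.i_mul_j, q.j_mul_i,
    q.j_mul_k, q.k_mul_j, neg_smul, one_smul, zero_smul, zero_mul, zero_sub, neg_neg,
    TensorProduct.tmul_neg, TensorProduct.neg_tmul]
  module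

theorem quaternionCasimir_mul_k :
    quaternionCasimir q * (1 ⊗ₜ q.k) = (q.k ⊗ₜ 1) * quaternionCasimir q := by
  have right_factor : (1 ⊗ₜ q.k : A ⊗[ℚ] A) = (1 ⊗ₜ q.i) * (1 ⊗ₜ q.j) := by simp
  have left_factor : (q.k ⊗ₜ 1 : A ⊗[ℚ] A) = (q.i ⊗ₜ 1) * (q.j ⊗ₜ 1) := by simp
  rw [right_factor, left_factor, ← mul_assoc, quaternionCasimir_mul_i, mul_assoc,
    quaternionCasimir_mul_j, mul_assoc]

end QuaternionCasimir

section QuaternionUnits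

variable {R : Type*} [CommRing R]

variable (R) in
/-- The units `i`, `j`, `k` of `ℍ[R]`. -/
@[simps! i_re i_imI i_imJ i_imK j_re j_imI j_imJ j_imK k_re k_imI k_imJ k_imK]
def quaternionUnits : QuaternionAlgebra.Basis ℍ[R] (-1 : R) 0 (-1) :=
  QuaternionAlgebra.Basis.self R

theorem eq_sum_smul_quaternionUnits (b : ℍ[R]) : b = b.re • 1 + b.imI • (quaternionUnits R).i +
    b.imJ • (quaternionUnits R).j + b.imK • (quaternionUnits R).k := by
  ext <;> simp

theorem quaternion_tracial_apply_eq_re_smul {M : Type*} [AddCommGroup M] [Module R M]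
    (h2 : IsUnit (2 : R)) (f : ℍ[R] →ₗ[R] M) (hf : ∀ a b, f (a * b) = f (b * a)) (z : ℍ[R]) :
    f z = z.re • f 1 := by
  let q := quaternionUnits R
  have im_eq_commutators : (2 : R) • (z - z.re • 1) = z.imI • (q.j * q.k - q.k * q.j) +
      z.imJ • (q.k * q.i - q.i * q.k) + z.imK • (q.i * q.j - q.j * q.i) := by
    ext <;> simp [q] <;> ring
  rw [← sub_eq_zero, ← map_smul, ← map_sub, ← h2.smul_eq_zero, ← map_smul, im_eq_commutators]
  simp only [map_add, map_smul, map_sub, hf q.k, hf q.j q.i, sub_self, smul_zero, add_zero]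

end QuaternionUnits

section Quaternion

open KaehlerDifferential (D)

variable {R : Type} [CommRing R] [Algebra ℚ R]

theorem hochClass_tmul_algebraMap (z : ℍ[R]) (s : R) :
    hochClass R (z ⊗ₜ algebraMap R ℍ[R] s) = z.re • hochClass R (1 ⊗ₜ algebraMap R ℍ[R] s) :=
  have h2 : IsUnit (2 : R) := by
    simpa only [map_ofNat] using (IsUnit.mk0 (2 : ℚ) two_ne_zero).map (algebraMap ℚ R)
  quaternion_tracial_apply_eq_re_smul h2
    (hochClass R ∘ₗ (TensorProduct.AlgebraTensorModule.mk ℚ R ℍ[R] ℍ[R]).flip (algebraMap R _ s))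
    (fun a b ↦ hochClass_mul_comm_tmul_algebraMap R a b s) z

variable (R) in
/-- The map `a ⊗ b ↦ re (a ∇b)`, where `∇` differentiates the coordinates of a quaternion. -/
def quaternionToKaehler : ℍ[R] ⊗[ℚ] ℍ[R] →ₗ[R] Ω[R⁄ℤ] :=
  TensorProduct.AlgebraTensorModule.lift <| LinearMap.mk₂' R ℚ
    (fun a b ↦ a.re • D ℤ R b.re - a.imI • D ℤ R b.imI - a.imJ • D ℤ R b.imJ - a.imK • D ℤ R b.imK)
    (fun a a' b ↦ by
      simp only [Quaternion.re_add, Quaternion.imI_add, Quaternion.imJ_add, Quaternion.imK_add]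
      module)
    (fun r a b ↦ by
      simp only [Quaternion.re_smul, Quaternion.imI_smul, Quaternion.imJ_smul, Quaternion.imK_smul,
        smul_eq_mul]
      module)
    (fun a b b' ↦ by
      simp only [Quaternion.re_add, Quaternion.imI_add, Quaternion.imJ_add, Quaternion.imK_add,
        map_add]
      module)
    (fun r a b ↦ by simp [map_rat_smul, smul_sub, smul_comm _ r])

@[simp]
theorem quaternionToKaehler_tmul (a b : ℍ[R]) : quaternionToKaehler R (a ⊗ₜ b) =
    a.re • D ℤ R b.re - a.imI • D ℤ R b.imI - a.imJ • D ℤ R b.imJ - a.imK • D ℤ R b.imK :=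
  rfl

theorem quaternionToKaehler_hochB2 (y : ℍ[R] ⊗[ℚ] (ℍ[R] ⊗[ℚ] ℍ[R])) :
    quaternionToKaehler R (hochB2 ℍ[R] y) = 0 := by
  suffices h : (quaternionToKaehler R).restrictScalars ℚ ∘ₗ hochB2 ℍ[R] = 0 from
    DFunLike.congr_fun h y
  refine TensorProduct.ext_threefold' fun a b c ↦ ?_
  simp only [LinearMap.comp_apply, LinearMap.restrictScalars_apply, hochB2_tmul, map_add, map_sub,
    quaternionToKaehler_tmul, Quaternion.re_mul, Quaternion.imI_mul, Quaternion.imJ_mul,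
    Quaternion.imK_mul, Derivation.leibniz, LinearMap.zero_apply]
  module

theorem hochClass_tmul_smul_eq_kaehlerToHoch_add {u : ℍ[R]}
    (hu : quaternionCasimir (quaternionUnits R) * (1 ⊗ₜ u) =
      (u ⊗ₜ 1) * quaternionCasimir (quaternionUnits R))
    (a : ℍ[R]) {s : R} (hus : quaternionToKaehler R (a ⊗ₜ (s • u)) = (u * a).re • D ℤ R s) :
    hochClass R (a ⊗ₜ (s • u)) = kaehlerToHoch ℍ[R] R (quaternionToKaehler R (a ⊗ₜ (s • u))) +
      hochClass R (((a * s • u - s • u * a) ⊗ₜ 1) * quaternionCasimir (quaternionUnits R)) := by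
  rw [hochClass_tmul_smul_eq_add_commutator R (mu2_quaternionCasimir _) hu,
    hochClass_tmul_algebraMap, hus, map_smul, kaehlerToHoch_D]

theorem hochClass_tmul_eq_kaehlerToHoch_add (a b : ℍ[R]) :
    hochClass R (a ⊗ₜ b) = kaehlerToHoch ℍ[R] R (quaternionToKaehler R (a ⊗ₜ b)) +
      hochClass R (((a * b - b * a) ⊗ₜ 1) * quaternionCasimir (quaternionUnits R)) := by
  have hone := hochClass_tmul_smul_eq_kaehlerToHoch_add
    (Commute.one_right _) a (s := b.re) (by simp)
  have hi := hochClass_tmul_smul_eq_kaehlerToHoch_add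
    (quaternionCasimir_mul_i _) a (s := b.imI) (by simp)
  have hj := hochClass_tmul_smul_eq_kaehlerToHoch_add
    (quaternionCasimir_mul_j _) a (s := b.imJ) (by simp)
  have hk := hochClass_tmul_smul_eq_kaehlerToHoch_add
    (quaternionCasimir_mul_k _) a (s := b.imK) (by simp)
  rw [eq_sum_smul_quaternionUnits b]
  simp only [mul_add, add_mul, add_sub_add_comm, TensorProduct.tmul_add, TensorProduct.add_tmul,
    map_add, hone, hi, hj, hk]
  abel

theorem hochClass_eq_kaehlerToHoch_add (x : ℍ[R] ⊗[ℚ] ℍ[R]) :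
    hochClass R x = kaehlerToHoch ℍ[R] R (quaternionToKaehler R x) +
      hochClass R (((mu2 ℍ[R] x - mu2 ℍ[R] (TensorProduct.comm ℚ ℍ[R] ℍ[R] x)) ⊗ₜ 1) *
        quaternionCasimir (quaternionUnits R)) := by
  induction x with
  | zero => simp
  | tmul a b => simpa using hochClass_tmul_eq_kaehlerToHoch_add a b
  | add x y hx hy =>
    simp only [map_add, add_sub_add_comm, TensorProduct.add_tmul, add_mul]
    rw [hx, hy]
    abel

theorem mem_B1_iff_quaternionToKaehler_eq_zero {x : ℍ[R] ⊗[ℚ] ℍ[R]} (hx : x ∈ I1 ℍ[R]) :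
    x ∈ B1 ℍ[R] ↔ quaternionToKaehler R x = 0 := by
  rw [mem_B1_iff_mem_range_hochB2 hx]
  refine ⟨?_, fun h ↦ ?_⟩
  · rintro ⟨y, rfl⟩
    exact quaternionToKaehler_hochB2 y
  · have hmu : mu2 ℍ[R] x = 0 := hx.1
    have hmu_comm : mu2 ℍ[R] (TensorProduct.comm ℚ ℍ[R] ℍ[R] x) = 0 := hx.2
    rw [← hochClass_eq_zero_iff R, hochClass_eq_kaehlerToHoch_add, h, hmu, hmu_comm]
    simp

theorem exists_mem_I1_quaternionToKaehler_eq (w : Ω[R⁄ℤ]) :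
    ∃ x ∈ I1 ℍ[R], quaternionToKaehler R x = w := by
  have hw : w ∈ Submodule.span R (Set.range (D ℤ R)) := by
    simp [KaehlerDifferential.span_range_derivation]
  induction hw using Submodule.closure_induction with
  | zero => exact ⟨0, zero_mem _, map_zero _⟩
  | add _ _ _ _ hx hy =>
    obtain ⟨x, hx, rfl⟩ := hx
    obtain ⟨y, hy, rfl⟩ := hy
    exact ⟨x + y, add_mem hx hy, map_add _ _ _⟩
  | smul_mem r _ hs =>
    obtain ⟨s, rfl⟩ := hs
    refine ⟨(r : ℍ[R]) ⊗ₜ (s : ℍ[R]) - ((r : ℍ[R]) * s) ⊗ₜ 1, ⟨?_, ?_⟩, ?_⟩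
    · simp
    · simp [← Quaternion.coe_mul, mul_comm]
    · simp

end Quaternion

theorem statement17_general (R : Type) [CommRing R] [Algebra ℚ R] :
    Nonempty ((I1 ℍ[R] ⧸ (B1 ℍ[R]).comap (I1 ℍ[R]).subtype) ≃+ Ω[R⁄ℤ]) := by
  let f : I1 ℍ[R] →ₗ[ℚ] Ω[R⁄ℤ] :=
    (quaternionToKaehler R).restrictScalars ℚ ∘ₗ (I1 ℍ[R]).subtype
  have ker_f : (B1 ℍ[R]).comap (I1 ℍ[R]).subtype = LinearMap.ker f :=
    Submodule.ext fun x ↦ mem_B1_iff_quaternionToKaehler_eq_zero x.2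
  have f_surjective : Function.Surjective f := fun w ↦
    have ⟨x, hx, hxw⟩ := exists_mem_I1_quaternionToKaehler_eq w
    ⟨⟨x, hx⟩, hxw⟩
  exact ⟨((Submodule.quotEquivOfEq _ _ ker_f).trans
    (f.quotKerEquivOfSurjective f_surjective)).toAddEquiv⟩

/-- For the real quaternion algebra (tensor products over `ℚ`),
`HH₁(ℍ) = I₁(ℍ)/B₁(ℍ)` is isomorphic as an abelian group to the Kähler differentials
`Ω¹_ℝ` of `ℝ` over `ℤ`. -/
theorem statement17 :
    Nonempty ((↥(I1 (Quaternion ℝ)) ⧸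
        (B1 (Quaternion ℝ)).comap (I1 (Quaternion ℝ)).subtype)
      ≃+ KaehlerDifferential ℤ ℝ) :=
  statement17_general ℝ

end
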